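/- arXiv:1011.1395 — 2 statements merged into one kernel-verified Lean document; each statement's English description precedes it below -/
import Mathlib

section
/- Let p be an odd prime, let q ≥ 2 be an integer divisible by p, let N ≥ 1 be an integer, set θ = p^N ∈ ℚ_p, and assume ‖θ‖_p ≤ ‖q‖_p². Let x₁ be a root in ℚ_p of x² + (2θ − θ² + 2q − 1)x + q² = 0 with ‖x₁‖_p = ‖q‖_p². Let g(x) = (θx + q)/(x + θ + q − 1), and let h be a function assigning to every finite word w over the alphabet {0,1} an element h(w) ∈ ℚ_p such that h(w) = g(h(w·0)) · g(h(w·1)) for every word w (where w·i denotes w with the letter i appended). If ‖h(w)‖_p ≠ 1 for every word w, then h(w) = x₁ for every word w. -/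
/-!
If `‖θ‖ < 1`, `‖q‖ < 1` and `‖x‖ ≠ 1`, the ultrametric equality gives `‖x + θ + q - 1‖ = max ‖x‖ 1`.
Hence, off the unit sphere, `g` takes values in the ball of radius `r = max ‖θ‖ ‖q‖ < 1` and is
`r`-Lipschitz. Two solutions of the recursion that avoid the unit sphere therefore differ at every
vertex by at most `r ^ n` for every `n`: the recursion writes the values at a vertex as products of
elements of the unit ball, and such products differ by no more than their factors do. So the two
solutions agree, and the constant `x₁` is one of them because it satisfies `x₁ = g x₁ ^ 2`.
-/

open scoped NNReal

theorem norm_prod_sub_prod_le_of_forall_le {R ι : Type*} [SeminormedCommRing R] [NormOneClass R]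
    [IsUltrametricDist R] {s : Finset ι} {a b : ι → R} {r : ℝ} (hr : 0 ≤ r)
    (ha : ∀ i ∈ s, ‖a i‖ ≤ 1) (hb : ∀ i ∈ s, ‖b i‖ ≤ 1) (hab : ∀ i ∈ s, ‖a i - b i‖ ≤ r) :
    ‖∏ i ∈ s, a i - ∏ i ∈ s, b i‖ ≤ r := by
  induction s using Finset.cons_induction with
  | empty => simpa using hr
  | cons i s _ ih =>
    simp only [Finset.forall_mem_cons] at ha hb hab
    have prod_norm_le : ‖∏ j ∈ s, a j‖ ≤ 1 :=
      Finset.prod_induction a (‖·‖ ≤ 1)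
        (fun _ _ hx hy => by simpa using norm_mul_le_of_le hx hy) norm_one.le ha.2
    have telescope : a i * ∏ j ∈ s, a j - b i * ∏ j ∈ s, b j =
        (a i - b i) * ∏ j ∈ s, a j + b i * (∏ j ∈ s, a j - ∏ j ∈ s, b j) := by ring
    rw [Finset.prod_cons, Finset.prod_cons, telescope]
    refine (IsUltrametricDist.norm_add_le_max _ _).trans (max_le ?_ ?_)
    · simpa using norm_mul_le_of_le hab.1 prod_norm_le
    · simpa using norm_mul_le_of_le hb.1 (ih ha.2 hb.2 hab.2)

/-- The compatibility equation for boundary functions on the rooted Cayley tree whose vertices are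
the finite words over `ι`, the successors of `w` being the words `w ++ [i]`. -/
def IsBoundaryFunction {R ι : Type*} [CommMonoid R] [Fintype ι] (g : R → R) (h : List ι → R) :
    Prop :=
  ∀ w, h w = ∏ i, g (h (w ++ [i]))

theorem IsBoundaryFunction.eq_of_lipschitzOnWith {R ι : Type*} [NormedCommRing R] [NormOneClass R]
    [IsUltrametricDist R] [Fintype ι] {g : R → R} {S : Set R} {r : ℝ≥0} {h h' : List ι → R}
    (hr : r < 1) (g_lipschitz : LipschitzOnWith r g S) (g_norm_le : ∀ x ∈ S, ‖g x‖ ≤ 1)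
    (hh : IsBoundaryFunction g h) (hh' : IsBoundaryFunction g h')
    (h_mem : ∀ w, h w ∈ S) (h'_mem : ∀ w, h' w ∈ S) : h = h' := by
  have norm_sub_le_of_succ {s : ℝ} (hs : 0 ≤ s) (w : List ι)
      (hsucc : ∀ i, ‖g (h (w ++ [i])) - g (h' (w ++ [i]))‖ ≤ s) : ‖h w - h' w‖ ≤ s := by
    rw [hh w, hh' w]
    exact norm_prod_sub_prod_le_of_forall_le hs (fun _ _ => g_norm_le _ (h_mem _))
      (fun _ _ => g_norm_le _ (h'_mem _)) fun i _ => hsucc i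
  have norm_sub_le_pow (n : ℕ) : ∀ w, ‖h w - h' w‖ ≤ (r : ℝ) ^ n := by
    induction n with
    | zero =>
      refine fun w => norm_sub_le_of_succ (by positivity) w fun i => ?_
      rw [pow_zero, sub_eq_add_neg]
      refine (IsUltrametricDist.norm_add_le_max _ _).trans (max_le (g_norm_le _ (h_mem _)) ?_)
      exact (norm_neg _).trans_le (g_norm_le _ (h'_mem _))
    | succ n ih =>
      refine fun w => norm_sub_le_of_succ (by positivity) w fun i => ?_
      rw [pow_succ']
      exact g_lipschitz.norm_sub_le_of_le (h_mem _) (h'_mem _) (ih _)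
  funext w
  have norm_sub_le_zero : ‖h w - h' w‖ ≤ 0 :=
    ge_of_tendsto' (tendsto_pow_atTop_nhds_zero_of_lt_one r.2 hr) fun n => norm_sub_le_pow n w
  exact sub_eq_zero.1 (norm_le_zero_iff.1 norm_sub_le_zero)

/-- The Möbius map `g` of the `(q + 1)`-state Potts model restricted to the invariant line, with
`θ` and `q` allowed to be any field elements. It takes the junk value `0` at its pole
`1 - θ - q`. -/
def pottsMap {K : Type*} [Field K] (θ q x : K) : K :=
  (θ * x + q) / (x + θ + q - 1)

section Field

variable {K : Type*} [Field K] {θ q x y : K}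

theorem pottsMap_sub_pottsMap (hx : x + θ + q - 1 ≠ 0) (hy : y + θ + q - 1 ≠ 0) :
    pottsMap θ q x - pottsMap θ q y =
      (θ - 1) * (θ + q) * (x - y) / ((x + θ + q - 1) * (y + θ + q - 1)) := by
  rw [pottsMap, pottsMap, div_sub_div _ _ hx hy]
  congr 1
  ring

theorem pottsMap_sq_eq_self (hx : x + θ + q - 1 ≠ 0)
    (root : x ^ 2 + (2 * θ - θ ^ 2 + 2 * q - 1) * x + q ^ 2 = 0) :
    pottsMap θ q x ^ 2 = x := by
  rw [pottsMap, div_pow, div_eq_iff (pow_ne_zero 2 hx)]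
  -- The fixed-point equation is the cubic `(x - 1) * (x ^ 2 + ⋯ + q ^ 2) = 0`.
  linear_combination (1 - x) * root

end Field

section NormedField

variable {K : Type*} [NormedField K] [IsUltrametricDist K] {θ q x y : K}

theorem norm_add_add_sub_one_eq_max (hθ : ‖θ‖ < 1) (hq : ‖q‖ < 1) (hx : ‖x‖ ≠ 1) :
    ‖x + θ + q - 1‖ = max ‖x‖ 1 := by
  have norm_add_lt_one : ‖θ + q‖ < 1 :=
    (IsUltrametricDist.norm_add_le_max θ q).trans_lt (max_lt hθ hq)
  have norm_add_sub_one : ‖θ + q - 1‖ = 1 := by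
    have norm_ne : ‖θ + q‖ ≠ ‖(-1 : K)‖ := by simpa using norm_add_lt_one.ne
    rw [sub_eq_add_neg, IsUltrametricDist.norm_add_eq_max_of_norm_ne_norm norm_ne, norm_neg,
      norm_one, max_eq_right norm_add_lt_one.le]
  rw [show x + θ + q - 1 = x + (θ + q - 1) by ring,
    IsUltrametricDist.norm_add_eq_max_of_norm_ne_norm (by rwa [norm_add_sub_one]),
    norm_add_sub_one]

theorem add_add_sub_one_ne_zero (hθ : ‖θ‖ < 1) (hq : ‖q‖ < 1) (hx : ‖x‖ ≠ 1) :
    x + θ + q - 1 ≠ 0 := by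
  rw [← norm_pos_iff, norm_add_add_sub_one_eq_max hθ hq hx]
  positivity

theorem norm_pottsMap_le (hθ : ‖θ‖ < 1) (hq : ‖q‖ < 1) (hx : ‖x‖ ≠ 1) :
    ‖pottsMap θ q x‖ ≤ max ‖θ‖ ‖q‖ := by
  rw [pottsMap, norm_div, norm_add_add_sub_one_eq_max hθ hq hx, div_le_iff₀ (by positivity)]
  refine (IsUltrametricDist.norm_add_le_max _ _).trans (max_le ?_ ?_)
  · rw [norm_mul]
    gcongr <;> exact le_max_left _ _
  · calc ‖q‖ = ‖q‖ * 1 := (mul_one _).symm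
      _ ≤ max ‖θ‖ ‖q‖ * max ‖x‖ 1 := by gcongr <;> exact le_max_right _ _

theorem norm_pottsMap_sub_pottsMap_le (hθ : ‖θ‖ < 1) (hq : ‖q‖ < 1) (hx : ‖x‖ ≠ 1)
    (hy : ‖y‖ ≠ 1) :
    ‖pottsMap θ q x - pottsMap θ q y‖ ≤ max ‖θ‖ ‖q‖ * ‖x - y‖ := by
  have norm_sub_one_le : ‖θ - 1‖ ≤ 1 := by
    simpa [sub_eq_add_neg, hθ.le] using IsUltrametricDist.norm_add_le_max θ (-1)
  have one_le_norm_denom : 1 ≤ ‖(x + θ + q - 1) * (y + θ + q - 1)‖ := by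
    rw [norm_mul, norm_add_add_sub_one_eq_max hθ hq hx, norm_add_add_sub_one_eq_max hθ hq hy]
    exact one_le_mul_of_one_le_of_one_le (le_max_right _ _) (le_max_right _ _)
  rw [pottsMap_sub_pottsMap (add_add_sub_one_ne_zero hθ hq hx) (add_add_sub_one_ne_zero hθ hq hy),
    norm_div]
  calc ‖(θ - 1) * (θ + q) * (x - y)‖ / ‖(x + θ + q - 1) * (y + θ + q - 1)‖
      ≤ ‖(θ - 1) * (θ + q) * (x - y)‖ := div_le_self (norm_nonneg _) one_le_norm_denom
    _ = ‖θ - 1‖ * ‖θ + q‖ * ‖x - y‖ := by rw [norm_mul, norm_mul]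
    _ ≤ 1 * max ‖θ‖ ‖q‖ * ‖x - y‖ := by gcongr; exact IsUltrametricDist.norm_add_le_max θ q
    _ = max ‖θ‖ ‖q‖ * ‖x - y‖ := by rw [one_mul]

theorem lipschitzOnWith_pottsMap (hθ : ‖θ‖ < 1) (hq : ‖q‖ < 1) :
    LipschitzOnWith (max ‖θ‖₊ ‖q‖₊) (pottsMap θ q) {x | ‖x‖ ≠ 1} :=
  lipschitzOnWith_iff_norm_sub_le.2 fun _ hx _ hy => norm_pottsMap_sub_pottsMap_le hθ hq hx hy

theorem IsBoundaryFunction.eq_of_norm_ne_one {ι : Type*} [Fintype ι] {h h' : List ι → K}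
    (hθ : ‖θ‖ < 1) (hq : ‖q‖ < 1) (hh : IsBoundaryFunction (pottsMap θ q) h)
    (hh' : IsBoundaryFunction (pottsMap θ q) h') (h_norm : ∀ w, ‖h w‖ ≠ 1)
    (h'_norm : ∀ w, ‖h' w‖ ≠ 1) : h = h' :=
  hh.eq_of_lipschitzOnWith (max_lt hθ hq) (lipschitzOnWith_pottsMap hθ hq)
    (fun _ hx => (norm_pottsMap_le hθ hq hx).trans (max_lt hθ hq).le) hh' h_norm h'_norm

theorem stmt_12_general {x₁ : K} (hθ : ‖θ‖ < 1) (hq : ‖q‖ < 1)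
    (h₁ : x₁ ^ 2 + (2 * θ - θ ^ 2 + 2 * q - 1) * x₁ + q ^ 2 = 0) (hn₁ : ‖x₁‖ ≠ 1)
    {h : List (Fin 2) → K}
    (hrec : ∀ w, h w = pottsMap θ q (h (w ++ [0])) * pottsMap θ q (h (w ++ [1])))
    (hnorm : ∀ w, ‖h w‖ ≠ 1) (w : List (Fin 2)) : h w = x₁ := by
  have h_boundary : IsBoundaryFunction (pottsMap θ q) h := by
    simpa only [IsBoundaryFunction, Fin.prod_univ_two] using hrec
  have const_boundary : IsBoundaryFunction (pottsMap θ q) fun _ : List (Fin 2) => x₁ := fun _ => by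
    rw [Fin.prod_univ_two, ← sq, pottsMap_sq_eq_self (add_add_sub_one_ne_zero hθ hq hn₁) h₁]
  exact congrFun (h_boundary.eq_of_norm_ne_one hθ hq const_boundary hnorm fun _ => hn₁) w

end NormedField

theorem stmt_12 (p : ℕ) [Fact p.Prime] (hp2 : p ≠ 2)
    (q : ℕ) (hq : 2 ≤ q) (hpq : p ∣ q)
    (N : ℕ) (hN : 1 ≤ N) (θ : ℚ_[p]) (hθ : θ = (p : ℚ_[p]) ^ N)
    (hθq : ‖θ‖ ≤ ‖(q : ℚ_[p])‖ ^ 2)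
    (x₁ : ℚ_[p])
    (h₁ : x₁ ^ 2 + (2 * θ - θ ^ 2 + 2 * q - 1) * x₁ + q ^ 2 = 0)
    (hn₁ : ‖x₁‖ = ‖(q : ℚ_[p])‖ ^ 2)
    (g : ℚ_[p] → ℚ_[p])
    (hg : g = fun x => (θ * x + q) / (x + θ + q - 1))
    (h : List (Fin 2) → ℚ_[p])
    (hrec : ∀ w : List (Fin 2), h w = g (h (w ++ [0])) * g (h (w ++ [1])))
    (hnorm : ∀ w : List (Fin 2), ‖h w‖ ≠ 1) :
    ∀ w : List (Fin 2), h w = x₁ := by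
  have norm_q_lt_one : ‖(q : ℚ_[p])‖ < 1 := Padic.norm_natCast_lt_one_iff.2 hpq
  have norm_q_sq_lt_one : ‖(q : ℚ_[p])‖ ^ 2 < 1 :=
    pow_lt_one₀ (norm_nonneg _) norm_q_lt_one two_ne_zero
  subst hg
  exact stmt_12_general (hθq.trans_lt norm_q_sq_lt_one) norm_q_lt_one h₁
    (hn₁.trans_lt norm_q_sq_lt_one).ne hrec hnorm
end

section
/- Let p be an odd prime, let q ≥ 1 be an integer, let M ≥ 1 be an integer, and set θ = p^{−M} ∈ ℚ_p, so ‖θ‖_p = p^M > 1. Let x₁ ≠ x₂ be two distinct roots in ℚ_p of x² + (2θ − θ² + 2q − 1)x + q² = 0, labelled so that ‖x₁‖_p ≥ ‖x₂‖_p. Then: ‖x₁‖_p = ‖θ‖_p², ‖x₂‖_p = (‖q‖_p/‖θ‖_p)², ‖θx₁ + q‖_p = ‖θ‖_p³, ‖x₁ + θ + q − 1‖_p = ‖θ‖_p², ‖θx₂ + q‖_p = ‖q‖_p, and ‖x₂ + θ + q − 1‖_p = ‖θ‖_p. -/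
/-!
The equation can be written `x ^ 2 + (2 * q - (θ - 1) ^ 2) * x + q ^ 2 = 0`, and for `‖q‖ ≤ 1 < ‖θ‖`
its linear coefficient has norm `‖θ‖ ^ 2`. Since `‖q ^ 2‖ < (‖θ‖ ^ 2) ^ 2`, the Newton polygon of
the quadratic has two distinct slopes, so the roots have norms `‖θ‖ ^ 2` and `‖q ^ 2‖ / ‖θ‖ ^ 2`.
In each of the four linear expressions a single term then dominates.
-/

section UltrametricAddGroup

variable {S : Type*} [SeminormedAddGroup S] [IsUltrametricDist S] {x y : S}

theorem norm_add_eq_left_of_norm_lt (h : ‖y‖ < ‖x‖) : ‖x + y‖ = ‖x‖ :=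
  (IsUltrametricDist.norm_add_eq_max_of_norm_ne_norm h.ne').trans (max_eq_left h.le)

theorem norm_add_eq_right_of_norm_lt (h : ‖x‖ < ‖y‖) : ‖x + y‖ = ‖y‖ :=
  (IsUltrametricDist.norm_add_eq_max_of_norm_ne_norm h.ne).trans (max_eq_right h.le)

end UltrametricAddGroup

theorem add_eq_neg_and_mul_eq_of_quadratic_roots {R : Type*} [CommRing R] [NoZeroDivisors R]
    {b c x y : R} (hxy : x ≠ y) (hx : x ^ 2 + b * x + c = 0) (hy : y ^ 2 + b * y + c = 0) :
    x + y = -b ∧ x * y = c := by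
  have hsum : x + y = -b := by
    apply mul_left_cancel₀ (sub_ne_zero.mpr hxy)
    linear_combination hx - hy
  exact ⟨hsum, by linear_combination x * hsum - hx⟩

theorem norm_eq_norm_add_of_norm_mul_lt_sq {R : Type*} [NonUnitalSeminormedRing R]
    [NormMulClass R] [IsUltrametricDist R] {x y : R} (hyx : ‖y‖ ≤ ‖x‖)
    (h : ‖x * y‖ < ‖x + y‖ ^ 2) : ‖x‖ = ‖x + y‖ := by
  rcases hyx.lt_or_eq with hlt | heq
  · exact (norm_add_eq_left_of_norm_lt hlt).symm
  · have hadd : ‖x + y‖ ≤ ‖x‖ := by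
      simpa only [heq, max_self] using IsUltrametricDist.norm_add_le_max x y
    have hsq : ‖x + y‖ ^ 2 ≤ ‖x * y‖ := by
      rw [norm_mul, heq, ← sq]
      gcongr
    exact absurd h hsq.not_gt

theorem norm_quadratic_roots_of_norm_lt_sq {R : Type*} [NormedCommRing R] [NormMulClass R]
    [IsUltrametricDist R] {b c x y : R} (hbc : ‖c‖ < ‖b‖ ^ 2) (hxy : x ≠ y)
    (hx : x ^ 2 + b * x + c = 0) (hy : y ^ 2 + b * y + c = 0) (hyx : ‖y‖ ≤ ‖x‖) :
    ‖x‖ = ‖b‖ ∧ ‖y‖ = ‖c‖ / ‖b‖ := by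
  obtain ⟨hsum, hprod⟩ := add_eq_neg_and_mul_eq_of_quadratic_roots hxy hx hy
  have hnorm_sum : ‖x + y‖ = ‖b‖ := by rw [hsum, norm_neg]
  have hx_norm : ‖x‖ = ‖b‖ := by
    rw [norm_eq_norm_add_of_norm_mul_lt_sq hyx (by rwa [hprod, hnorm_sum]), hnorm_sum]
  have hb : ‖b‖ ≠ 0 := fun hb ↦ (norm_nonneg c).not_gt (by simpa [hb] using hbc)
  exact ⟨hx_norm, by rw [eq_div_iff hb, ← hprod, norm_mul, hx_norm, mul_comm]⟩

section Coefficients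

variable {R : Type*} [SeminormedRing R] [NormOneClass R] [IsUltrametricDist R] {θ q : R}

theorem norm_sub_one_eq_of_one_lt (hθ : 1 < ‖θ‖) : ‖θ - 1‖ = ‖θ‖ := by
  rw [sub_eq_add_neg]
  exact norm_add_eq_left_of_norm_lt (by rwa [norm_neg, norm_one])

theorem norm_add_sub_one_eq (hq : ‖q‖ ≤ 1) (hθ : 1 < ‖θ‖) : ‖θ + q - 1‖ = ‖θ‖ := by
  have hθq : ‖θ + q‖ = ‖θ‖ := norm_add_eq_left_of_norm_lt (hq.trans_lt hθ)
  rw [norm_sub_one_eq_of_one_lt (hθ.trans_eq hθq.symm), hθq]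

theorem norm_two_mul_sub_sq_add_two_mul_sub_one [NormMulClass R] (hq : ‖q‖ ≤ 1)
    (hθ : 1 < ‖θ‖) : ‖2 * θ - θ ^ 2 + 2 * q - 1‖ = ‖θ‖ ^ 2 := by
  have hsq : ‖-(θ - 1) ^ 2‖ = ‖θ‖ ^ 2 := by
    rw [norm_neg, norm_pow, norm_sub_one_eq_of_one_lt hθ]
  have htwo : ‖2 * q‖ ≤ 1 := by
    rw [two_mul]
    exact (IsUltrametricDist.norm_add_le_max q q).trans (max_le hq hq)
  have hlt : ‖2 * q‖ < ‖-(θ - 1) ^ 2‖ :=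
    hsq.symm ▸ htwo.trans_lt (one_lt_pow₀ hθ two_ne_zero)
  rw [show 2 * θ - θ ^ 2 + 2 * q - 1 = -(θ - 1) ^ 2 + 2 * q by noncomm_ring,
    norm_add_eq_left_of_norm_lt hlt, hsq]

end Coefficients

section LinearExpressions

variable {R : Type*} [NonUnitalSeminormedRing R] [NormMulClass R] [IsUltrametricDist R] {θ q x : R}

theorem norm_mul_add_of_norm_eq_sq (hq : ‖q‖ ≤ 1) (hθ : 1 < ‖θ‖)
    (hx : ‖x‖ = ‖θ‖ ^ 2) : ‖θ * x + q‖ = ‖θ‖ ^ 3 := by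
  have hθx : ‖θ * x‖ = ‖θ‖ ^ 3 := by rw [norm_mul, hx, pow_succ' ‖θ‖ 2]
  have hlt : ‖q‖ < ‖θ * x‖ := hθx.symm ▸ hq.trans_lt (one_lt_pow₀ hθ three_ne_zero)
  rw [norm_add_eq_left_of_norm_lt hlt, hθx]

theorem norm_mul_add_of_norm_eq_div_sq (hqθ : ‖q‖ < ‖θ‖) (hx : ‖x‖ = (‖q‖ / ‖θ‖) ^ 2) :
    ‖θ * x + q‖ = ‖q‖ := by
  have hθ : 0 < ‖θ‖ := (norm_nonneg q).trans_lt hqθ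
  have hθx : ‖θ * x‖ = ‖q‖ * (‖q‖ / ‖θ‖) := by
    rw [norm_mul, hx]
    field_simp
  rcases (norm_nonneg q).eq_or_lt with hq | hq
  · have hθx_zero : ‖θ * x‖ = 0 := by rw [hθx, ← hq, zero_mul]
    refine le_antisymm ?_ (hq ▸ norm_nonneg _)
    simpa only [hθx_zero, ← hq, max_self] using IsUltrametricDist.norm_add_le_max (θ * x) q
  · apply norm_add_eq_right_of_norm_lt
    rw [hθx]
    exact mul_lt_of_lt_one_right hq ((div_lt_one hθ).mpr hqθ)

end LinearExpressions

theorem one_lt_norm_inv_prime_pow (p : ℕ) [Fact p.Prime] {M : ℕ} (hM : M ≠ 0) :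
    1 < ‖((p : ℚ_[p]) ^ M)⁻¹‖ := by
  have hp : 0 < ‖(p : ℚ_[p])‖ := by simpa using (Fact.out : p.Prime).pos
  rw [norm_inv, norm_pow, one_lt_inv₀ (pow_pos hp M)]
  exact pow_lt_one₀ hp.le Padic.norm_p_lt_one hM

theorem norm_fixed_points {R : Type*} [NormedCommRing R] [NormOneClass R] [NormMulClass R]
    [IsUltrametricDist R] {θ q x₁ x₂ : R} (hq : ‖q‖ ≤ 1) (hθ : 1 < ‖θ‖) (hx : x₁ ≠ x₂)
    (h₁ : x₁ ^ 2 + (2 * θ - θ ^ 2 + 2 * q - 1) * x₁ + q ^ 2 = 0)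
    (h₂ : x₂ ^ 2 + (2 * θ - θ ^ 2 + 2 * q - 1) * x₂ + q ^ 2 = 0)
    (hord : ‖x₂‖ ≤ ‖x₁‖) :
    ‖x₁‖ = ‖θ‖ ^ 2 ∧ ‖x₂‖ = (‖q‖ / ‖θ‖) ^ 2 := by
  have hcoeff := norm_two_mul_sub_sq_add_two_mul_sub_one hq hθ
  have hslopes : ‖q ^ 2‖ < ‖2 * θ - θ ^ 2 + 2 * q - 1‖ ^ 2 := by
    rw [hcoeff, norm_pow]
    exact pow_lt_pow_left₀ (hq.trans_lt (one_lt_pow₀ hθ two_ne_zero)) (norm_nonneg q) two_ne_zero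
  have hroots := norm_quadratic_roots_of_norm_lt_sq hslopes hx h₁ h₂ hord
  rwa [hcoeff, norm_pow, ← div_pow] at hroots

theorem stmt_13_general {R : Type*} [NormedCommRing R] [NormOneClass R] [NormMulClass R]
    [IsUltrametricDist R] {θ q x₁ x₂ : R} (hq : ‖q‖ ≤ 1) (hθ : 1 < ‖θ‖) (hx : x₁ ≠ x₂)
    (h₁ : x₁ ^ 2 + (2 * θ - θ ^ 2 + 2 * q - 1) * x₁ + q ^ 2 = 0)
    (h₂ : x₂ ^ 2 + (2 * θ - θ ^ 2 + 2 * q - 1) * x₂ + q ^ 2 = 0)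
    (hord : ‖x₂‖ ≤ ‖x₁‖) :
    ‖x₁‖ = ‖θ‖ ^ 2 ∧ ‖x₂‖ = (‖q‖ / ‖θ‖) ^ 2 ∧
    ‖θ * x₁ + q‖ = ‖θ‖ ^ 3 ∧ ‖x₁ + θ + q - 1‖ = ‖θ‖ ^ 2 ∧
    ‖θ * x₂ + q‖ = ‖q‖ ∧ ‖x₂ + θ + q - 1‖ = ‖θ‖ := by
  obtain ⟨hx₁, hx₂⟩ := norm_fixed_points hq hθ hx h₁ h₂ hord
  have hqθ : ‖q‖ < ‖θ‖ := hq.trans_lt hθ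
  have hconst : ‖θ + q - 1‖ = ‖θ‖ := norm_add_sub_one_eq hq hθ
  have hx₁_gt : ‖θ‖ < ‖x₁‖ := hx₁.symm ▸ lt_self_pow₀ hθ one_lt_two
  have hx₂_lt : ‖x₂‖ < ‖θ‖ :=
    calc ‖x₂‖ = (‖q‖ / ‖θ‖) ^ 2 := hx₂
      _ ≤ 1 := pow_le_one₀ (by positivity) (div_le_one_of_le₀ hqθ.le (norm_nonneg θ))
      _ < ‖θ‖ := hθ
  refine ⟨hx₁, hx₂, norm_mul_add_of_norm_eq_sq hq hθ hx₁, ?_,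
    norm_mul_add_of_norm_eq_div_sq hqθ hx₂, ?_⟩
  · rw [add_assoc, add_sub_assoc, norm_add_eq_left_of_norm_lt (by rwa [hconst]), hx₁]
  · rw [add_assoc, add_sub_assoc, norm_add_eq_right_of_norm_lt (by rwa [hconst]), hconst]

theorem stmt_13 (p : ℕ) [Fact p.Prime] (hp2 : p ≠ 2)
    (q : ℕ) (hq : 1 ≤ q) (M : ℕ) (hM : 1 ≤ M)
    (θ : ℚ_[p]) (hθ : θ = ((p : ℚ_[p]) ^ M)⁻¹)
    (x₁ x₂ : ℚ_[p]) (hx : x₁ ≠ x₂)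
    (h₁ : x₁ ^ 2 + (2 * θ - θ ^ 2 + 2 * q - 1) * x₁ + q ^ 2 = 0)
    (h₂ : x₂ ^ 2 + (2 * θ - θ ^ 2 + 2 * q - 1) * x₂ + q ^ 2 = 0)
    (hord : ‖x₂‖ ≤ ‖x₁‖) :
    ‖x₁‖ = ‖θ‖ ^ 2 ∧ ‖x₂‖ = (‖(q : ℚ_[p])‖ / ‖θ‖) ^ 2 ∧
    ‖θ * x₁ + q‖ = ‖θ‖ ^ 3 ∧ ‖x₁ + θ + q - 1‖ = ‖θ‖ ^ 2 ∧
    ‖θ * x₂ + q‖ = ‖(q : ℚ_[p])‖ ∧ ‖x₂ + θ + q - 1‖ = ‖θ‖ := by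
  have hθ_norm : 1 < ‖θ‖ := hθ ▸ one_lt_norm_inv_prime_pow p (Nat.one_le_iff_ne_zero.mp hM)
  exact stmt_13_general (IsUltrametricDist.norm_natCast_le_one ℚ_[p] q) hθ_norm hx h₁ h₂ hord
end
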